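/- arXiv:2310.11611 — 3 statements merged into one kernel-verified Lean document; each statement's English description precedes it below -/
import Mathlib

section
/- In the permuted-fold hash model with n = k·m (k ≥ 1 an integer) and n ≥ 2, for any x, y ∈ ℝⁿ the variance (over the random permutation π and the i.i.d. signs g) of the RPS estimator is Var[⟨x̂,ŷ⟩_RPS] = (1/m)·((n−m)/(n−1))·( ∑_{i≠j} x_i² y_j² + ∑_{i≠j} x_i y_i x_j y_j ). -/
open Finset

/-!
For distinct `i` and `j` the product of the signs at `i` and `j` is the Walsh function of `{i, j}`.
For a fixed hash the diagonal terms of the estimator are therefore constant, equal to the inner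
product of `x` and `y`, and the deviation from it is a Walsh expansion in which each pair `{i, j}`
occurs twice, as `(i, j)` and as `(j, i)`. Walsh functions are orthonormal, so the conditional
variance is the sum of `x i ^ 2 * y j ^ 2 + x i * y i * (x j * y j)` over the colliding ordered
pairs `(i, j)`. Averaging over the hash multiplies each pair by its collision probability. A uniform
permutation sends `(i, j)` to a uniform ordered pair of distinct points, and each point shares its
residue modulo `m` with `n / m - 1` of the other `n - 1` points.
-/

open scoped BigOperators

section Walsh

variable {ι R : Type*} [CommRing R]

/-- The Walsh function of `S` on the Boolean cube: the product of the signs in `S`, where `true`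
stands for the sign `1` and `false` for `-1`. -/
def walsh (S : Finset ι) (s : ι → Bool) : R := ∏ i ∈ S, if s i then 1 else -1

lemma walsh_mul_self (S : Finset ι) (s : ι → Bool) : (walsh S s * walsh S s : R) = 1 := by
  rw [walsh, ← prod_mul_distrib]
  exact prod_eq_one fun i _ => by split_ifs <;> norm_num

lemma walsh_singleton (i : ι) (s : ι → Bool) : (walsh {i} s : R) = if s i then 1 else -1 :=
  prod_singleton _ _

variable [DecidableEq ι]

lemma walsh_pair {i j : ι} (hij : i ≠ j) (s : ι → Bool) :
    (walsh {i, j} s : R) = walsh {i} s * walsh {j} s := by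
  simp only [walsh, prod_pair hij, prod_singleton]

lemma walsh_update_not_of_notMem {S : Finset ι} {i : ι} (hi : i ∉ S) (s : ι → Bool) :
    (walsh S (Function.update s i (!s i)) : R) = walsh S s :=
  prod_congr rfl fun j hj => by rw [Function.update_of_ne (ne_of_mem_of_not_mem hj hi)]

lemma walsh_update_not_of_mem {S : Finset ι} {i : ι} (hi : i ∈ S) (s : ι → Bool) :
    (walsh S (Function.update s i (!s i)) : R) = -walsh S s := by
  have flip_sign : (walsh {i} (Function.update s i (!s i)) : R) = -walsh {i} s := by
    cases h : s i <;> simp [walsh_singleton, h]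
  have split (t : ι → Bool) : (walsh S t : R) = walsh {i} t * walsh (S.erase i) t := by
    rw [walsh_singleton, walsh, walsh, mul_prod_erase S (fun j => if t j then (1 : R) else -1) hi]
  rw [split, split, flip_sign, walsh_update_not_of_notMem (notMem_erase i S), neg_mul]

variable [Fintype ι]

lemma sum_walsh_mul_walsh_of_mem_of_notMem {S T : Finset ι} {i : ι} (hS : i ∈ S) (hT : i ∉ T) :
    ∑ s, (walsh S s * walsh T s : R) = 0 := by
  refine sum_involution (fun s _ => Function.update s i (!s i)) (fun s _ => ?_) (fun s _ _ h => ?_)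
    (fun _ _ => mem_univ _) (fun s _ => by simp)
  · rw [walsh_update_not_of_mem hS, walsh_update_not_of_notMem hT, neg_mul, add_neg_cancel]
  · simpa using congrFun h i

variable [Algebra ℚ≥0 R]

theorem expect_walsh_mul_walsh (S T : Finset ι) :
    𝔼 s, (walsh S s * walsh T s : R) = if S = T then 1 else 0 := by
  split_ifs with hST
  · subst hST
    simp only [walsh_mul_self, Fintype.expect_one]
  · suffices ∑ s, (walsh S s * walsh T s : R) = 0 by rw [expect, this, smul_zero]
    obtain ⟨i, hi⟩ := symmDiff_nonempty.2 hST
    obtain ⟨hS, hT⟩ | ⟨hT, hS⟩ := mem_symmDiff.1 hi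
    · exact sum_walsh_mul_walsh_of_mem_of_notMem hS hT
    · simpa only [mul_comm] using sum_walsh_mul_walsh_of_mem_of_notMem (R := R) hT hS

lemma expect_walsh_of_nonempty {S : Finset ι} (hS : S.Nonempty) : 𝔼 s, (walsh S s : R) = 0 := by
  simpa [walsh, hS.ne_empty] using expect_walsh_mul_walsh (R := R) S ∅

lemma expect_offDiag_walsh (a : ι × ι → R) :
    𝔼 s, ∑ p ∈ univ.offDiag, a p * walsh {p.1, p.2} s = 0 := by
  simp only [expect_sum_comm, ← mul_expect, expect_walsh_of_nonempty (insert_nonempty _ _),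
    mul_zero, sum_const_zero]

theorem expect_sq_offDiag_walsh (a : ι × ι → R) :
    𝔼 s, (∑ p ∈ univ.offDiag, a p * walsh {p.1, p.2} s) ^ 2
      = ∑ p ∈ univ.offDiag, a p * (a p + a p.swap) := by
  have pair_eq_iff (p q : ι × ι) :
      ({p.1, p.2} : Finset ι) = {q.1, q.2} ↔ q = p ∨ q = p.swap := by
    rw [← coe_inj, coe_pair, coe_pair, Set.pair_eq_pair_iff]
    grind
  have inner_sum (p : ι × ι) (hp : p ∈ univ.offDiag) :
      ∑ q ∈ univ.offDiag, a q * (if ({p.1, p.2} : Finset ι) = {q.1, q.2} then 1 else 0)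
        = a p + a p.swap := by
    have same_pair : univ.offDiag.filter (fun q => ({p.1, p.2} : Finset ι) = {q.1, q.2})
        = {p, p.swap} := by
      ext q
      simp only [mem_filter, pair_eq_iff, mem_insert, mem_singleton]
      grind
    have swap_ne : p ≠ p.swap := by grind
    simp only [mul_ite, mul_one, mul_zero]
    rw [← sum_filter, same_pair, sum_pair swap_ne]
  calc 𝔼 s, (∑ p ∈ univ.offDiag, a p * walsh {p.1, p.2} s) ^ 2
      = ∑ p ∈ univ.offDiag, ∑ q ∈ univ.offDiag,
          a p * a q * 𝔼 s, walsh {p.1, p.2} s * walsh {q.1, q.2} s := by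
        simp only [sq, sum_mul_sum, expect_sum_comm, mul_mul_mul_comm (a _), mul_expect]
    _ = ∑ p ∈ univ.offDiag, a p * (a p + a p.swap) := by
        refine sum_congr rfl fun p hp => ?_
        simp only [expect_walsh_mul_walsh, mul_assoc, ← mul_sum, inner_sum p hp]

end Walsh

lemma sum_univ_offDiag {ι M : Type*} [Fintype ι] [DecidableEq ι] [AddCommMonoid M]
    (f : ι × ι → M) : ∑ p ∈ univ.offDiag, f p = ∑ i, ∑ j ∈ univ \ {i}, f (i, j) :=
  sum_finset_product _ _ _ fun p => by simp [eq_comm]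

section Estimator

variable {ι κ R : Type*} [Fintype ι] [DecidableEq κ] [CommRing R]

/-- The RPS estimator of the inner product of `x` and `y` for the hash `h` and the signs `s`,
encoded as in `walsh`. -/
def rpsEstimator (h : ι → κ) (s : ι → Bool) (x y : ι → R) : R :=
  ∑ i, ∑ j, x i * y j * (if s i then 1 else -1) * (if s j then 1 else -1) *
    if h i = h j then 1 else 0

variable [DecidableEq ι]

lemma rpsEstimator_eq_dotProduct_add (h : ι → κ) (s : ι → Bool) (x y : ι → R) :
    rpsEstimator h s x y = x ⬝ᵥ y + ∑ p ∈ univ.offDiag,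
      (x p.1 * y p.2 * if h p.1 = h p.2 then 1 else 0) * walsh {p.1, p.2} s := by
  rw [sum_univ_offDiag, dotProduct, ← sum_add_distrib]
  refine sum_congr rfl fun i _ => ?_
  rw [sum_eq_add_sum_sdiff_singleton_of_mem (mem_univ i)]
  congr 1
  · rw [if_pos rfl]
    split_ifs <;> ring
  · refine sum_congr rfl fun j hj => ?_
    have hij : i ≠ j := by grind
    rw [walsh_pair hij, walsh_singleton, walsh_singleton]
    ring

variable [Algebra ℚ≥0 R]

theorem expect_rpsEstimator (h : ι → κ) (x y : ι → R) :
    𝔼 s, rpsEstimator h s x y = x ⬝ᵥ y := by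
  simp only [rpsEstimator_eq_dotProduct_add, expect_add_distrib, Fintype.expect_const,
    expect_offDiag_walsh, add_zero]

theorem expect_sq_rpsEstimator_sub_dotProduct (h : ι → κ) (x y : ι → R) :
    𝔼 s, (rpsEstimator h s x y - x ⬝ᵥ y) ^ 2 = ∑ p ∈ univ.offDiag,
      (if h p.1 = h p.2 then 1 else 0) *
        (x p.1 ^ 2 * y p.2 ^ 2 + x p.1 * y p.1 * (x p.2 * y p.2)) := by
  simp only [rpsEstimator_eq_dotProduct_add, add_sub_cancel_left, expect_sq_offDiag_walsh]
  refine sum_congr rfl fun p _ => ?_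
  simp only [Prod.fst_swap, Prod.snd_swap, eq_comm (a := h p.2)]
  split_ifs <;> ring

theorem expect_expect_sq_rpsEstimator_sub_dotProduct {Ω : Type*} [Fintype Ω] (h : Ω → ι → κ)
    (x y : ι → R) (c : R)
    (hc : ∀ i j, i ≠ j → 𝔼 ω, (if h ω i = h ω j then (1 : R) else 0) = c) :
    𝔼 ω, 𝔼 s, (rpsEstimator (h ω) s x y - x ⬝ᵥ y) ^ 2
      = c * ((∑ i, ∑ j ∈ univ \ {i}, x i ^ 2 * y j ^ 2)
          + ∑ i, ∑ j ∈ univ \ {i}, x i * y i * (x j * y j)) := by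
  simp only [expect_sq_rpsEstimator_sub_dotProduct, expect_sum_comm, ← expect_mul,
    ← sum_add_distrib]
  rw [← sum_univ_offDiag fun p => x p.1 ^ 2 * y p.2 ^ 2 + x p.1 * y p.1 * (x p.2 * y p.2), mul_sum]
  exact sum_congr rfl fun p hp => by rw [hc _ _ (mem_offDiag.1 hp).2.2]

end Estimator

section RandomPermutation

variable {ι : Type*} [Fintype ι] [DecidableEq ι]

theorem expect_perm_apply_pair {M : Type*} [AddCommMonoid M] [Module ℚ≥0 M] (f : ι × ι → M)
    {i j : ι} (hij : i ≠ j) :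
    𝔼 π : Equiv.Perm ι, f (π i, π j) = 𝔼 p ∈ univ.offDiag, f p := by
  have pair_irrel (p : ι × ι) (hp : p ∈ univ.offDiag) :
      𝔼 π : Equiv.Perm ι, f (π p.1, π p.2) = 𝔼 π : Equiv.Perm ι, f (π i, π j) := by
    obtain ⟨σ, hσi, hσj⟩ := MulAction.is_two_pretransitive_iff.1
      (Equiv.Perm.isMultiplyPretransitive ι 2) hij (mem_offDiag.1 hp).2.2
    refine Fintype.expect_equiv (Equiv.mulRight σ) _ _ fun π => ?_
    simp only [← hσi, ← hσj, Equiv.Perm.smul_def, Equiv.coe_mulRight, Equiv.Perm.mul_apply]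
  calc 𝔼 π : Equiv.Perm ι, f (π i, π j)
      = 𝔼 p ∈ univ.offDiag, 𝔼 π : Equiv.Perm ι, f (π p.1, π p.2) := by
        rw [expect_congr rfl pair_irrel, expect_const ⟨(i, j), by simpa using hij⟩]
    _ = 𝔼 π : Equiv.Perm ι, 𝔼 p ∈ univ.offDiag, f (π p.1, π p.2) := expect_comm _ _ _
    _ = 𝔼 _π : Equiv.Perm ι, 𝔼 p ∈ univ.offDiag, f p := by
        refine expect_congr rfl fun π _ => expect_equiv (π.prodCongr π) (fun p => ?_) fun _ _ => rfl
        simp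
    _ = 𝔼 p ∈ univ.offDiag, f p := Fintype.expect_const _

theorem expect_perm_collision_of_card_fiber_eq {κ K : Type*} [DecidableEq κ] [Field K] [CharZero K]
    (f : ι → κ) (k : ℕ) (hf : ∀ a, #{b | f b = f a} = k) {i j : ι} (hij : i ≠ j) :
    𝔼 π : Equiv.Perm ι, (if f (π i) = f (π j) then (1 : K) else 0)
      = (k - 1) / (Fintype.card ι - 1) := by
  have other_collisions (a : ι) :
      ∑ b ∈ univ \ {a}, (if f a = f b then (1 : K) else 0) = k - 1 := by
    rw [eq_sub_iff_add_eq', ← hf a, ← sum_boole]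
    simp only [eq_comm (b := f a)]
    rw [sum_eq_add_sum_sdiff_singleton_of_mem (mem_univ a), if_pos rfl]
  have card_ne_zero : (Fintype.card ι : K) ≠ 0 := by
    have : Nonempty ι := ⟨i⟩
    exact_mod_cast Fintype.card_ne_zero
  rw [expect_perm_apply_pair (fun p => if f p.1 = f p.2 then (1 : K) else 0) hij,
    expect_eq_sum_div_card, sum_univ_offDiag, offDiag_card,
    Nat.cast_sub (Nat.le_mul_self _), Nat.cast_mul, card_univ, ← mul_sub_one]
  simp only [other_collisions, sum_const, card_univ, nsmul_eq_mul]
  exact mul_div_mul_left _ _ card_ne_zero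

end RandomPermutation

lemma card_fin_mul_filter_mod_eq {k m : ℕ} (hm : 0 < m) (a : ℕ) :
    #{b : Fin (k * m) | (b : ℕ) % m = a % m} = k := by
  calc #{b : Fin (k * m) | (b : ℕ) % m = a % m}
      = (k * m).count (· ≡ a [MOD m]) := by
        rw [Nat.count_eq_card_filter_range, card_filter, card_filter,
          ← Fin.sum_univ_eq_sum_range (fun b => if b ≡ a [MOD m] then 1 else 0)]
        rfl
    _ = k := by simp [Nat.count_modEq_card _ hm, hm]

theorem expect_perm_mod_collision {K : Type*} [Field K] [CharZero K] {n m k : ℕ} (hnm : n = k * m)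
    {i j : Fin n} (hij : i ≠ j) :
    𝔼 π : Equiv.Perm (Fin n), (if (π i : ℕ) % m = (π j : ℕ) % m then (1 : K) else 0)
      = 1 / m * ((n - m) / (n - 1)) := by
  subst hnm
  have hm : 0 < m := Nat.pos_of_mul_pos_left i.pos
  have hm_ne : (m : K) ≠ 0 := Nat.cast_ne_zero.2 hm.ne'
  calc 𝔼 π : Equiv.Perm (Fin (k * m)), (if (π i : ℕ) % m = (π j : ℕ) % m then (1 : K) else 0)
      = (k - 1) / ((k * m : ℕ) - 1) := by
        rw [expect_perm_collision_of_card_fiber_eq (fun b : Fin (k * m) => (b : ℕ) % m) k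
          (fun a => card_fin_mul_filter_mod_eq hm a) hij, Fintype.card_fin]
    _ = 1 / m * (((k * m : ℕ) - m) / ((k * m : ℕ) - 1)) := by
        rw [← mul_div_assoc]
        congr 1
        field_simp
        push_cast
        ring

lemma sum_sum_div_card_mul_card {Ω Ω' K : Type*} [Fintype Ω] [Fintype Ω'] [Field K] [CharZero K]
    (f : Ω → Ω' → K) :
    (∑ ω, ∑ ω', f ω ω') / (Fintype.card Ω * Fintype.card Ω') = 𝔼 ω, 𝔼 ω', f ω ω' := by
  simp only [Fintype.expect_eq_sum_div_card, ← sum_div, div_div, mul_comm]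

/-- Variance of the RPS inner-product estimator in the permuted-fold hash model with
`n = k·m` (`k ≥ 1`), `n ≥ 2`: the variance over the uniformly random permutation `π`
(giving the hash `h(i) = π(i) mod m`) and the i.i.d. uniform signs `g` equals
`(1/m)·((n−m)/(n−1))·( ∑_{i≠j} x_i² y_j² + ∑_{i≠j} x_i y_i x_j y_j )`. -/
theorem rps_estimator_variance (n m k : ℕ) (hk : 1 ≤ k) (hnm : n = k * m) (hn : 2 ≤ n)
    (x y : Fin n → ℝ) :
    (let sgn : (Fin n → Bool) → Fin n → ℝ := fun s i => if s i then 1 else -1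
     let est : Equiv.Perm (Fin n) → (Fin n → Bool) → ℝ := fun π s =>
       ∑ i, ∑ i', x i * y i' * sgn s i * sgn s i' *
         (if (π i : ℕ) % m = (π i' : ℕ) % m then (1 : ℝ) else 0)
     let N : ℝ := (Fintype.card (Equiv.Perm (Fin n)) : ℝ) * (2 : ℝ) ^ n
     let μ : ℝ := (∑ π : Equiv.Perm (Fin n), ∑ s : Fin n → Bool, est π s) / N
     (∑ π : Equiv.Perm (Fin n), ∑ s : Fin n → Bool, (est π s - μ) ^ 2) / N)
      = (1 / (m : ℝ)) * (((n : ℝ) - (m : ℝ)) / ((n : ℝ) - 1)) *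
          ((∑ i, ∑ j ∈ Finset.univ \ {i}, (x i) ^ 2 * (y j) ^ 2)
            + ∑ i, ∑ j ∈ Finset.univ \ {i}, x i * y i * (x j * y j)) := by
  extract_lets _ est N μ
  have est_eq (π : Equiv.Perm (Fin n)) (s : Fin n → Bool) :
      est π s = rpsEstimator (fun i => (π i : ℕ) % m) s x y := rfl
  have hN : N = Fintype.card (Equiv.Perm (Fin n)) * Fintype.card (Fin n → Bool) := by
    simp [N]
  have hμ : μ = x ⬝ᵥ y :=
    calc μ = 𝔼 π, 𝔼 s, est π s := by rw [← sum_sum_div_card_mul_card, ← hN]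
      _ = x ⬝ᵥ y := by simp only [est_eq, expect_rpsEstimator, Fintype.expect_const]
  rw [hN, sum_sum_div_card_mul_card, hμ]
  simp only [est_eq]
  exact expect_expect_sq_rpsEstimator_sub_dotProduct _ x y _
    fun _ _ => expect_perm_mod_collision hnm
end

section
/- For any x ∈ ℝⁿ with n ≥ 2 and any 1 ≤ m ≤ n, the variance of the pruning estimator of the squared norm over a uniformly random size-m subset S of {1,…,n} is Var[(n/m)·∑_{i∈S} x_i²] = (n/m − 1)·∑_{i=1}ⁿ x_i⁴ + ((m−n)/(m(n−1)))·∑_{i≠j} x_i² x_j². -/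
open Finset
open scoped BigOperators

/-!
Under a uniformly random `m`-subset `S` of an `n`-set, a `k`-subset is contained in `S` with
probability `(m choose k) / (n choose k)`. The cases `k = 1` and `k = 2` give the mean of
`∑ i ∈ S, a i` and, after splitting the square into diagonal and off-diagonal terms, its second
moment. The variance of the pruning estimator is that of the sample sum of `a i = x i ^ 2`, scaled
by `(n / m) ^ 2`.
-/

variable {ι 𝕜 : Type*} [Field 𝕜]

section UniformVariance

variable [CharZero 𝕜]

/-- The variance of `f` under the uniform distribution on the finite set `s`; it is `0` when `s` is
empty. -/
def uniformVariance (s : Finset ι) (f : ι → 𝕜) : 𝕜 :=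
  𝔼 i ∈ s, (f i - 𝔼 j ∈ s, f j) ^ 2

lemma uniformVariance_eq_sum_div_card (s : Finset ι) (f : ι → 𝕜) :
    uniformVariance s f = (∑ i ∈ s, (f i - (∑ j ∈ s, f j) / #s) ^ 2) / #s := by
  simp only [uniformVariance, expect_eq_sum_div_card]

lemma uniformVariance_const_mul (c : 𝕜) (s : Finset ι) (f : ι → 𝕜) :
    uniformVariance s (fun i ↦ c * f i) = c ^ 2 * uniformVariance s f := by
  simp only [uniformVariance, ← mul_expect, ← mul_sub, mul_pow]

lemma uniformVariance_eq_expect_sq_sub (s : Finset ι) (f : ι → 𝕜) :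
    uniformVariance s f = 𝔼 i ∈ s, f i ^ 2 - (𝔼 i ∈ s, f i) ^ 2 := by
  obtain rfl | hs := s.eq_empty_or_nonempty
  · simp [uniformVariance]
  simp only [uniformVariance, sub_sq, expect_add_distrib, expect_sub_distrib, ← expect_mul,
    ← mul_expect, expect_const hs]
  ring

end UniformVariance

lemma sum_offDiag_eq_sum_sum_sdiff {M : Type*} [AddCommMonoid M] [DecidableEq ι] (s : Finset ι)
    (f : ι × ι → M) :
    ∑ p ∈ s.offDiag, f p = ∑ i ∈ s, ∑ j ∈ s \ {i}, f (i, j) :=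
  sum_finset_product _ _ _ (by grind)

lemma sq_sum_eq_sum_sq_add_sum_offDiag {R : Type*} [Semiring R] (s : Finset ι) (a : ι → R) :
    (∑ i ∈ s, a i) ^ 2 = ∑ i ∈ s, a i ^ 2 + ∑ p ∈ s.offDiag, a p.1 * a p.2 := by
  classical
  rw [sum_offDiag_eq_sum_sum_sdiff, sq, sum_mul_sum, ← sum_add_distrib]
  refine sum_congr rfl fun i hi ↦ ?_
  rw [sum_eq_add_sum_sdiff_singleton_of_mem hi, sq]

section UniformSubset

lemma choose_mul_card_filter_powersetCard_subset [DecidableEq ι] {s t : Finset ι} (hts : t ⊆ s)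
    (m : ℕ) :
    (#s).choose #t * #{S ∈ powersetCard m s | t ⊆ S} = (#s).choose m * m.choose #t := by
  obtain htm | hmt := le_or_gt #t m
  · rw [card_filter_powersetCard_subset t s m hts htm, Nat.choose_mul htm]
  · have hempty : {S ∈ powersetCard m s | t ⊆ S} = ∅ :=
      filter_eq_empty_iff.2 fun S hS htS ↦
        hmt.not_ge ((mem_powersetCard.1 hS).2 ▸ card_le_card htS)
    rw [hempty, card_empty, Nat.choose_eq_zero_of_lt hmt, mul_zero, mul_zero]

variable [CharZero 𝕜] {s : Finset ι} {m : ℕ}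

lemma expect_powersetCard_ite_subset [DecidableEq ι] {t : Finset ι} (hts : t ⊆ s) (hms : m ≤ #s)
    (c : 𝕜) :
    𝔼 S ∈ powersetCard m s, (if t ⊆ S then c else 0)
      = m.choose #t / (#s).choose #t * c := by
  have hm : ((#s).choose m : 𝕜) ≠ 0 := Nat.cast_ne_zero.2 (Nat.choose_pos hms).ne'
  have ht : ((#s).choose #t : 𝕜) ≠ 0 :=
    Nat.cast_ne_zero.2 (Nat.choose_pos (card_le_card hts)).ne'
  have hcount : ((#s).choose #t : 𝕜) * #{S ∈ powersetCard m s | t ⊆ S}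
      = (#s).choose m * m.choose #t := by
    exact_mod_cast choose_mul_card_filter_powersetCard_subset hts m
  rw [expect_eq_sum_div_card, ← sum_filter, sum_const, nsmul_eq_mul, card_powersetCard]
  field_simp
  linear_combination c * hcount

lemma expect_powersetCard_sum_filter_subset [DecidableEq ι] {κ : Type*} {A : Finset κ}
    {t : κ → Finset ι} {k : ℕ} (ht : ∀ a ∈ A, t a ∈ powersetCard k s) (hms : m ≤ #s) (f : κ → 𝕜) :
    𝔼 S ∈ powersetCard m s, ∑ a ∈ A with t a ⊆ S, f a
      = m.choose k / (#s).choose k * ∑ a ∈ A, f a := by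
  simp only [sum_filter]
  rw [expect_sum_comm, mul_sum]
  refine sum_congr rfl fun a ha ↦ ?_
  obtain ⟨hsub, rfl⟩ := mem_powersetCard.1 (ht a ha)
  exact expect_powersetCard_ite_subset hsub hms (f a)

lemma expect_powersetCard_sum (hms : m ≤ #s) (f : ι → 𝕜) :
    𝔼 S ∈ powersetCard m s, ∑ i ∈ S, f i = m / #s * ∑ i ∈ s, f i := by
  classical
  have hsub : ∀ i ∈ s, {i} ∈ powersetCard 1 s := by simp
  have hfilter : ∀ S ∈ powersetCard m s, {i ∈ s | {i} ⊆ S} = S := by grind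
  have hmean := expect_powersetCard_sum_filter_subset hsub hms f
  rw [Nat.choose_one_right, Nat.choose_one_right] at hmean
  rw [← hmean]
  exact expect_congr rfl fun S hS ↦ by rw [hfilter S hS]

lemma expect_powersetCard_sum_offDiag (hms : m ≤ #s) (f : ι × ι → 𝕜) :
    𝔼 S ∈ powersetCard m s, ∑ p ∈ S.offDiag, f p
      = m * (m - 1) / (#s * (#s - 1)) * ∑ p ∈ s.offDiag, f p := by
  classical
  have hsub : ∀ p ∈ s.offDiag, {p.1, p.2} ∈ powersetCard 2 s := by grind
  have hfilter : ∀ S ∈ powersetCard m s, {p ∈ s.offDiag | {p.1, p.2} ⊆ S} = S.offDiag := by grind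
  have hmean := expect_powersetCard_sum_filter_subset hsub hms f
  rw [Nat.cast_choose_two, Nat.cast_choose_two, div_div_div_cancel_right₀ two_ne_zero] at hmean
  rw [← hmean]
  exact expect_congr rfl fun S hS ↦ by rw [hfilter S hS]

theorem uniformVariance_powersetCard_sum (hms : m ≤ #s) (hs : 1 < #s) (a : ι → 𝕜) :
    uniformVariance (powersetCard m s) (fun S ↦ ∑ i ∈ S, a i)
      = m * (#s - m) / #s ^ 2
        * (∑ i ∈ s, a i ^ 2 - (∑ p ∈ s.offDiag, a p.1 * a p.2) / (#s - 1)) := by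
  have hs₀ : (#s : 𝕜) ≠ 0 := Nat.cast_ne_zero.2 (by lia)
  have hs₁ : (#s : 𝕜) - 1 ≠ 0 := sub_ne_zero.2 (Nat.cast_ne_one.2 (by lia))
  rw [uniformVariance_eq_expect_sq_sub, expect_powersetCard_sum hms, mul_pow]
  simp only [sq_sum_eq_sum_sq_add_sum_offDiag, expect_add_distrib]
  rw [expect_powersetCard_sum hms, expect_powersetCard_sum_offDiag hms]
  field_simp
  ring

theorem pruning_norm_estimator_variance_general (hs : 2 ≤ #s) (hm1 : 1 ≤ m) (hms : m ≤ #s)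
    (a : ι → 𝕜) :
    uniformVariance (powersetCard m s) (fun S ↦ (#s / m : 𝕜) * ∑ i ∈ S, a i)
      = (#s / m - 1) * ∑ i ∈ s, a i ^ 2
        + (m - #s) / (m * (#s - 1)) * ∑ p ∈ s.offDiag, a p.1 * a p.2 := by
  have hm₀ : (m : 𝕜) ≠ 0 := Nat.cast_ne_zero.2 (by lia)
  have hs₀ : (#s : 𝕜) ≠ 0 := Nat.cast_ne_zero.2 (by lia)
  have hs₁ : (#s : 𝕜) - 1 ≠ 0 := sub_ne_zero.2 (Nat.cast_ne_one.2 (by lia))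
  rw [uniformVariance_const_mul, uniformVariance_powersetCard_sum hms hs]
  field_simp
  ring

end UniformSubset

/-- Variance of the pruning estimator of the squared norm over a uniformly random
size-`m` subset `S` of `{1,…,n}`:
`Var[(n/m)·∑_{i∈S} x_i²] = (n/m − 1)·∑ x_i⁴ + ((m−n)/(m(n−1)))·∑_{i≠j} x_i² x_j²`. -/
theorem pruning_norm_estimator_variance (n m : ℕ) (hn : 2 ≤ n) (hm1 : 1 ≤ m) (hmn : m ≤ n)
    (x : Fin n → ℝ) :
    (let est : Finset (Fin n) → ℝ := fun S => ((n : ℝ) / (m : ℝ)) * ∑ i ∈ S, (x i) ^ 2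
     let 𝒮 : Finset (Finset (Fin n)) := Finset.powersetCard m (Finset.univ : Finset (Fin n))
     let μ : ℝ := (∑ S ∈ 𝒮, est S) / (𝒮.card : ℝ)
     (∑ S ∈ 𝒮, (est S - μ) ^ 2) / (𝒮.card : ℝ))
      = ((n : ℝ) / (m : ℝ) - 1) * ∑ i, (x i) ^ 4
        + (((m : ℝ) - (n : ℝ)) / ((m : ℝ) * ((n : ℝ) - 1))) *
            ∑ i, ∑ j ∈ Finset.univ \ {i}, (x i) ^ 2 * (x j) ^ 2 := by
  have hx : ∀ i, x i ^ 4 = (x i ^ 2) ^ 2 := fun i ↦ pow_mul (x i) 2 2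
  simpa only [uniformVariance_eq_sum_div_card, sum_offDiag_eq_sum_sum_sdiff, card_univ,
    Fintype.card_fin, hx] using pruning_norm_estimator_variance_general (s := univ)
      (by simpa using hn) hm1 (by simpa using hmn) (fun i ↦ x i ^ 2)
end

section
/- Let n ≥ 2, 1 ≤ m < n, and let X_1,…,X_n be independent real random variables with X_i distributed as a centered Gaussian with variance σ_i² > 0. Then E[(n/m − 1)·∑_{i=1}ⁿ X_i⁴ + ((m−n)/(m(n−1)))·∑_{i≠j} X_i² X_j²] ≥ E[(2/m)·((n−m)/(n−1))·∑_{i≠j} X_i² X_j²], i.e. the expected variance of the pruning squared-norm estimator is at least the expected variance of the RPS squared-norm estimator, with equality if and only if σ_1 = σ_2 = … = σ_n. -/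
open Finset MeasureTheory ProbabilityTheory

/-!
Only the second and fourth moments matter. With `v i = E[X i ^ 2]` and `E[X i ^ 4] = 3 * v i ^ 2`,
the gap between the two expectations is a positive multiple of
`(n - 1) * ∑ i, v i ^ 2 - ∑_{i ≠ j} v i * v j = (1 / 2) * ∑ i, ∑ j, (v i - v j) ^ 2`,
which is nonnegative and vanishes exactly when `v` is constant. The Gaussian moments come from the
differential equation `M' t = (μ + v * t) * M t` of the moment generating function.
-/

section SumSubSq

variable {ι R : Type*} [Fintype ι]

lemma sum_sum_sub_sq [DecidableEq ι] [CommRing R] (a : ι → R) :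
    ∑ i, ∑ j, (a i - a j) ^ 2 =
      2 * (((Fintype.card ι : R) - 1) * ∑ i, a i ^ 2 - ∑ i, ∑ j ∈ univ \ {i}, a i * a j) := by
  have off_diag (i : ι) : ∑ j ∈ univ \ {i}, a i * a j = a i * ∑ j, a j - a i ^ 2 := by
    rw [sum_sdiff_eq_sub (subset_univ _), mul_sum, sum_singleton, sq]
  simp only [off_diag, sub_sq, sum_add_distrib, sum_sub_distrib, mul_assoc, ← mul_sum, ← sum_mul,
    sum_const, card_univ, nsmul_eq_mul]
  ring

lemma sum_sum_sub_sq_nonneg [Ring R] [LinearOrder R] [IsStrictOrderedRing R] (a : ι → R) :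
    0 ≤ ∑ i, ∑ j, (a i - a j) ^ 2 :=
  sum_nonneg fun _ _ => sum_nonneg fun _ _ => sq_nonneg _

lemma sum_sum_sub_sq_eq_zero_iff [Ring R] [LinearOrder R] [IsStrictOrderedRing R]
    (a : ι → R) : ∑ i, ∑ j, (a i - a j) ^ 2 = 0 ↔ ∀ i j, a i = a j := by
  simp only [sum_eq_zero_iff_of_nonneg, sum_nonneg, sq_nonneg,
    mem_univ, forall_const, implies_true, pow_eq_zero_iff two_ne_zero, sub_eq_zero]

end SumSubSq

section GaussianMoments

open scoped ContDiff

lemma iteratedDeriv_add_two_of_deriv_eq_affine_mul {𝕜 : Type*} [NontriviallyNormedField 𝕜]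
    {f : 𝕜 → 𝕜} {a b : 𝕜} (hf : ContDiff 𝕜 ∞ f) (hderiv : deriv f = fun t => (a + b * t) * f t)
    (k : ℕ) :
    iteratedDeriv (k + 2) f = fun t =>
      (a + b * t) * iteratedDeriv (k + 1) f t + (k + 1) * b * iteratedDeriv k f t := by
  have hasDerivAt_iterated (l : ℕ) (t : 𝕜) :
      HasDerivAt (iteratedDeriv l f) (iteratedDeriv (l + 1) f t) t := by
    rw [iteratedDeriv_succ]
    exact (hf.differentiable_iteratedDeriv l (by exact_mod_cast ENat.natCast_lt_top l) t).hasDerivAt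
  have hasDerivAt_affine (t : 𝕜) : HasDerivAt (fun t => a + b * t) b t := by
    simpa using ((hasDerivAt_id t).const_mul b).const_add a
  induction k with
  | zero =>
    ext t
    rw [iteratedDeriv_succ, iteratedDeriv_one, hderiv]
    have h := (hasDerivAt_affine t).fun_mul (hasDerivAt_iterated 0 t)
    simp only [iteratedDeriv_zero, zero_add, iteratedDeriv_one, hderiv] at h ⊢
    rw [h.deriv]
    push_cast
    ring
  | succ k ih =>
    ext t
    rw [iteratedDeriv_succ, congrArg deriv ih]
    have h := ((hasDerivAt_affine t).fun_mul (hasDerivAt_iterated (k + 1) t)).fun_add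
      ((hasDerivAt_iterated k t).const_mul ((k + 1) * b))
    rw [h.deriv]
    push_cast
    ring

lemma integral_pow_add_two_gaussianReal (μ : ℝ) (v : NNReal) (k : ℕ) :
    ∫ x, x ^ (k + 2) ∂gaussianReal μ v =
      μ * ∫ x, x ^ (k + 1) ∂gaussianReal μ v + (k + 1) * v * ∫ x, x ^ k ∂gaussianReal μ v := by
  have moment_eq (l : ℕ) : ∫ x, x ^ l ∂gaussianReal μ v =
      iteratedDeriv l (mgf (fun x => x) (gaussianReal μ v)) 0 := by
    rw [iteratedDeriv_mgf_zero (by simp)]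
    rfl
  have deriv_mgf : deriv (mgf (fun x => x) (gaussianReal μ v)) =
      fun t => (μ + v * t) * mgf (fun x => x) (gaussianReal μ v) t := by
    rw [mgf_fun_id_gaussianReal]
    ext t
    have h : HasDerivAt (fun t => μ * t + v * t ^ 2 / 2) (μ + v * t) t := by
      refine (((hasDerivAt_id' t).const_mul μ).add
        (((hasDerivAt_pow 2 t).const_mul (v : ℝ)).div_const 2)).congr_deriv ?_
      push_cast
      ring
    rw [h.exp.deriv, mul_comm]
  have contDiff_mgf : ContDiff ℝ ∞ (mgf (fun x => x) (gaussianReal μ v)) := by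
    rw [mgf_fun_id_gaussianReal]
    fun_prop
  simp [moment_eq, iteratedDeriv_add_two_of_deriv_eq_affine_mul contDiff_mgf deriv_mgf]

lemma integral_sq_gaussianReal_zero (v : NNReal) : ∫ x, x ^ 2 ∂gaussianReal 0 v = v := by
  simpa using integral_pow_add_two_gaussianReal 0 v 0

lemma integral_pow_four_gaussianReal_zero (v : NNReal) :
    ∫ x, x ^ 4 ∂gaussianReal 0 v = 3 * (v : ℝ) ^ 2 := by
  rw [integral_pow_add_two_gaussianReal 0 v 2, integral_sq_gaussianReal_zero]
  push_cast
  ring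

end GaussianMoments

section Moments

variable {Ω : Type*} [MeasurableSpace Ω] {P : Measure Ω} {X : Ω → ℝ}

lemma integral_pow_of_hasLaw {μ : Measure ℝ} (hX : HasLaw X μ P) (k : ℕ) :
    ∫ ω, X ω ^ k ∂P = ∫ x, x ^ k ∂μ :=
  hX.integral_comp (f := (· ^ k)) (by fun_prop)

lemma memLp_sq_of_memLp_four (hX : MemLp X 4 P) : MemLp (fun ω => X ω ^ 2) 2 P := by
  rw [memLp_two_iff_integrable_sq (hX.aestronglyMeasurable.fun_pow 2)]
  simpa [← pow_mul, Even.pow_abs (by decide : Even 4)] using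
    hX.integrable_norm_pow (p := 4) (by simp)

lemma integrable_pow_four_of_memLp_sq (hX : MemLp (fun ω => X ω ^ 2) 2 P) :
    Integrable (fun ω => X ω ^ 4) P := by
  simpa only [← pow_mul] using hX.integrable_sq

end Moments

section NormVariance

variable {ι : Type*} [Fintype ι] [DecidableEq ι]

/-- The variance, at a fixed vector `x`, of the squared-norm estimator that prunes `x` to a
uniformly random subset of `m` coordinates. The size `m` is taken real. -/
noncomputable def pruningNormVariance (m : ℝ) (x : ι → ℝ) : ℝ :=
  ((Fintype.card ι : ℝ) / m - 1) * ∑ i, x i ^ 4 +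
    ((m - Fintype.card ι) / (m * ((Fintype.card ι : ℝ) - 1))) *
      ∑ i, ∑ j ∈ univ \ {i}, x i ^ 2 * x j ^ 2

/-- The variance, at a fixed vector `x`, of the RPS squared-norm estimator of size `m` in the
permuted-fold hash model. The size `m` is taken real, so it need not divide the dimension. -/
noncomputable def rpsNormVariance (m : ℝ) (x : ι → ℝ) : ℝ :=
  (2 / m) * (((Fintype.card ι : ℝ) - m) / ((Fintype.card ι : ℝ) - 1)) *
    ∑ i, ∑ j ∈ univ \ {i}, x i ^ 2 * x j ^ 2

lemma pruningNormVariance_sub_rpsNormVariance {m : ℝ} (hm : m ≠ 0) (x : ι → ℝ) :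
    pruningNormVariance m x - rpsNormVariance m x =
      ((Fintype.card ι : ℝ) - m) / m * (∑ i, x i ^ 4 -
        3 / ((Fintype.card ι : ℝ) - 1) * ∑ i, ∑ j ∈ univ \ {i}, x i ^ 2 * x j ^ 2) := by
  rw [pruningNormVariance, rpsNormVariance, div_sub_one hm, div_mul_eq_div_div]
  ring

variable {Ω : Type*} [MeasurableSpace Ω] {P : Measure Ω} {X Y : ι → Ω → ℝ} {m : ℝ}

lemma integrable_sum_sum_mul (hY : ∀ i, MemLp (Y i) 2 P) :
    Integrable (fun ω => ∑ i, ∑ j ∈ univ \ {i}, Y i ω * Y j ω) P :=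
  integrable_finsetSum _ fun i _ => integrable_finsetSum _ fun j _ => (hY i).integrable_mul (hY j)

lemma integral_sum_sum_mul_of_uncorrelated [IsProbabilityMeasure P] (hY : ∀ i, MemLp (Y i) 2 P)
    (huncorr : Pairwise fun i j => cov[Y i, Y j; P] = 0) :
    ∫ ω, ∑ i, ∑ j ∈ univ \ {i}, Y i ω * Y j ω ∂P =
      ∑ i, ∑ j ∈ univ \ {i}, (∫ ω, Y i ω ∂P) * ∫ ω, Y j ω ∂P := by
  have integrable_mul (i j : ι) : Integrable (fun ω => Y i ω * Y j ω) P :=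
    (hY i).integrable_mul (hY j)
  rw [integral_finsetSum _ fun i _ => integrable_finsetSum _ fun j _ => integrable_mul i j]
  refine sum_congr rfl fun i _ => ?_
  rw [integral_finsetSum _ fun j _ => integrable_mul i j]
  refine sum_congr rfl fun j hj => ?_
  have hij : i ≠ j := by simpa [eq_comm] using hj
  exact sub_eq_zero.mp ((covariance_eq_sub (hY i) (hY j)).symm.trans (huncorr hij))

lemma integrable_pruningNormVariance (hX : ∀ i, MemLp (fun ω => X i ω ^ 2) 2 P) :
    Integrable (fun ω => pruningNormVariance m fun i => X i ω) P :=
  ((integrable_finsetSum _ fun i _ => integrable_pow_four_of_memLp_sq (hX i)).const_mul _).add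
    ((integrable_sum_sum_mul hX).const_mul _)

lemma integrable_rpsNormVariance (hX : ∀ i, MemLp (fun ω => X i ω ^ 2) 2 P) :
    Integrable (fun ω => rpsNormVariance m fun i => X i ω) P :=
  (integrable_sum_sum_mul hX).const_mul _

lemma integral_pruningNormVariance_sub_integral_rpsNormVariance [Nontrivial ι]
    [IsProbabilityMeasure P] (hm : m ≠ 0) (hX : ∀ i, MemLp (fun ω => X i ω ^ 2) 2 P)
    (huncorr : Pairwise fun i j => cov[fun ω => X i ω ^ 2, fun ω => X j ω ^ 2; P] = 0)
    (hfourth : ∀ i, ∫ ω, X i ω ^ 4 ∂P = 3 * (∫ ω, X i ω ^ 2 ∂P) ^ 2) :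
    (∫ ω, pruningNormVariance m (fun i => X i ω) ∂P) -
        ∫ ω, rpsNormVariance m (fun i => X i ω) ∂P =
      3 * ((Fintype.card ι : ℝ) - m) / (2 * m * ((Fintype.card ι : ℝ) - 1)) *
        ∑ i, ∑ j, ((∫ ω, X i ω ^ 2 ∂P) - ∫ ω, X j ω ^ 2 ∂P) ^ 2 := by
  have hcard : (Fintype.card ι : ℝ) - 1 ≠ 0 :=
    (sub_pos.mpr (by exact_mod_cast Fintype.one_lt_card)).ne'
  have integrable_pow_four (i : ι) : Integrable (fun ω => X i ω ^ 4) P :=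
    integrable_pow_four_of_memLp_sq (hX i)
  have integral_sum_pow_four :
      ∫ ω, ∑ i, X i ω ^ 4 ∂P = 3 * ∑ i, (∫ ω, X i ω ^ 2 ∂P) ^ 2 := by
    rw [integral_finsetSum _ fun i _ => integrable_pow_four i, mul_sum]
    exact sum_congr rfl fun i _ => hfourth i
  rw [← integral_sub (integrable_pruningNormVariance hX) (integrable_rpsNormVariance hX)]
  simp only [pruningNormVariance_sub_rpsNormVariance hm]
  rw [integral_const_mul, integral_sub (integrable_finsetSum _ fun i _ => integrable_pow_four i)
      ((integrable_sum_sum_mul hX).const_mul _), integral_const_mul, integral_sum_pow_four,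
    integral_sum_sum_mul_of_uncorrelated hX huncorr, sum_sum_sub_sq]
  field_simp

theorem expected_pruning_norm_variance_ge_rps_general [Nontrivial ι] [IsProbabilityMeasure P]
    (hm : 0 < m) (hmn : m < Fintype.card ι) (hX : ∀ i, MemLp (fun ω => X i ω ^ 2) 2 P)
    (huncorr : Pairwise fun i j => cov[fun ω => X i ω ^ 2, fun ω => X j ω ^ 2; P] = 0)
    (hfourth : ∀ i, ∫ ω, X i ω ^ 4 ∂P = 3 * (∫ ω, X i ω ^ 2 ∂P) ^ 2) :
    ∫ ω, rpsNormVariance m (fun i => X i ω) ∂P ≤ ∫ ω, pruningNormVariance m (fun i => X i ω) ∂P ∧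
      (∫ ω, pruningNormVariance m (fun i => X i ω) ∂P =
          ∫ ω, rpsNormVariance m (fun i => X i ω) ∂P ↔
        ∀ i j, ∫ ω, X i ω ^ 2 ∂P = ∫ ω, X j ω ^ 2 ∂P) := by
  have coeff_pos : 0 < 3 * ((Fintype.card ι : ℝ) - m) / (2 * m * ((Fintype.card ι : ℝ) - 1)) := by
    have hcard : (1 : ℝ) < Fintype.card ι := by exact_mod_cast Fintype.one_lt_card
    have := sub_pos.mpr hcard
    have := sub_pos.mpr hmn
    positivity
  have gap := integral_pruningNormVariance_sub_integral_rpsNormVariance hm.ne' hX huncorr hfourth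
  constructor
  · rw [← sub_nonneg, gap]
    exact mul_nonneg coeff_pos.le (sum_sum_sub_sq_nonneg _)
  · rw [← sub_eq_zero, gap, mul_eq_zero, or_iff_right coeff_pos.ne', sum_sum_sub_sq_eq_zero_iff]

end NormVariance

/-- For `n ≥ 2`, `1 ≤ m < n` and independent `X_i ∼ N(0, σ_i²)` with `σ_i > 0`, the
expected variance of the pruning squared-norm estimator is at least that of the RPS
squared-norm estimator:
`E[(n/m − 1)·∑ X_i⁴ + ((m−n)/(m(n−1)))·∑_{i≠j} X_i² X_j²]
  ≥ E[(2/m)·((n−m)/(n−1))·∑_{i≠j} X_i² X_j²]`, with equality iff all `σ_i` are equal. -/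
theorem expected_pruning_norm_variance_ge_rps {Ω : Type*} [MeasurableSpace Ω]
    (P : Measure Ω) [IsProbabilityMeasure P] (n m : ℕ) (hn : 2 ≤ n) (hm1 : 1 ≤ m)
    (hmn : m < n) (X : Fin n → Ω → ℝ) (σ : Fin n → ℝ) (hσ : ∀ i, 0 < σ i)
    (hmeas : ∀ i, Measurable (X i))
    (hindep : iIndepFun X P)
    (hdist : ∀ i, Measure.map (X i) P = gaussianReal 0 (Real.toNNReal ((σ i) ^ 2))) :
    (let Eprune : ℝ := ∫ ω, (((n : ℝ) / (m : ℝ) - 1) * ∑ i, (X i ω) ^ 4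
        + (((m : ℝ) - (n : ℝ)) / ((m : ℝ) * ((n : ℝ) - 1))) *
            ∑ i, ∑ j ∈ Finset.univ \ {i}, (X i ω) ^ 2 * (X j ω) ^ 2) ∂P
     let Erps : ℝ := ∫ ω, (((2 : ℝ) / (m : ℝ)) * (((n : ℝ) - (m : ℝ)) / ((n : ℝ) - 1)) *
            ∑ i, ∑ j ∈ Finset.univ \ {i}, (X i ω) ^ 2 * (X j ω) ^ 2) ∂P
     Erps ≤ Eprune ∧ (Eprune = Erps ↔ ∀ i j, σ i = σ j)) := by
  have law (i : Fin n) : HasLaw (X i) (gaussianReal 0 (Real.toNNReal (σ i ^ 2))) P :=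
    ⟨(hmeas i).aemeasurable, hdist i⟩
  have memLp_sq (i : Fin n) : MemLp (fun ω => X i ω ^ 2) 2 P :=
    memLp_sq_of_memLp_four ((law i).hasGaussianLaw.memLp (by simp))
  have uncorrelated : Pairwise fun i j => cov[fun ω => X i ω ^ 2, fun ω => X j ω ^ 2; P] = 0 :=
    fun i j hij => ((hindep.indepFun hij).comp (measurable_id.pow_const 2)
      (measurable_id.pow_const 2)).covariance_eq_zero (memLp_sq i) (memLp_sq j)
  have second_moment (i : Fin n) : ∫ ω, X i ω ^ 2 ∂P = σ i ^ 2 := by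
    rw [integral_pow_of_hasLaw (law i), integral_sq_gaussianReal_zero,
      Real.coe_toNNReal _ (sq_nonneg _)]
  have fourth_moment (i : Fin n) : ∫ ω, X i ω ^ 4 ∂P = 3 * (∫ ω, X i ω ^ 2 ∂P) ^ 2 := by
    rw [integral_pow_of_hasLaw (law i), integral_pow_four_gaussianReal_zero,
      integral_pow_of_hasLaw (law i), integral_sq_gaussianReal_zero]
  have : Nontrivial (Fin n) := Fin.nontrivial_iff_two_le.mpr hn
  have main := expected_pruning_norm_variance_ge_rps_general (m := m) (by exact_mod_cast hm1)
    (by simpa using hmn) memLp_sq uncorrelated fourth_moment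
  simpa only [pruningNormVariance, rpsNormVariance, Fintype.card_fin, second_moment,
    pow_left_inj₀ (hσ _).le (hσ _).le two_ne_zero] using main
end
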